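/- No deterministic online algorithm for the fractional problem cSP has competitive ratio smaller than 2: for every deterministic online algorithm A producing fractional states x_t ∈ [0,1] (each x_t depending only on β and the prefix g_1,…,g_t, with x_0 = 0), every real c < 2 and every real γ, there exist T ∈ ℕ, β > 0 and nonnegative cost functions g_1,…,g_T such that CCost_A > c·cOpt + γ. Consequently the expected competitive ratio of every randomized online algorithm for problem SP is at least 2. -/

import Mathlib

/-- The fractional cost `CCost` of a schedule `x`: the operating cost at time
`t` is `(1 − x t)·g_t(0) + x t·g_t(1)`, plus the switching cost
`β·(x t − x (t−1))⁺`. -/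
noncomputable def cost (T : ℕ) (β : ℝ) (g0 g1 : ℕ → ℝ) (x : ℕ → ℝ) : ℝ :=
  ∑ t ∈ Finset.Icc 1 T, ((1 - x t) * g0 t + x t * g1 t + β * max (x t - x (t - 1)) 0)

/-- The fractional offline optimal value `cOpt` of problem cSP: the infimum of
`CCost` over all fractional schedules in `[0,1]` starting at `0`. -/
noncomputable def copt (T : ℕ) (β : ℝ) (g0 g1 : ℕ → ℝ) : ℝ :=
  sInf {c : ℝ | ∃ x : ℕ → ℝ, (∀ t, 0 ≤ x t ∧ x t ≤ 1) ∧ x 0 = 0 ∧ c = cost T β g0 g1 x}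

/-!
The offline work function records the least cost `w₀`, `w₁` of serving the requests so far and then
standing in state `0` or `1`.  The adversary charges a small amount `β * δ` to the state which the
algorithm favours relative to the gap `w₁ - w₀`.  Each charge that raises `w₀ + w₁` costs the
algorithm, up to a potential and up to a factor `1 - 3 * δ`, at least as much as that rise.  Since
the optimum is at most `w₀ ≤ w₁`, this gives the ratio `2 * (1 - 3 * δ)`.  A charge that raises
neither `w₀` nor `w₁` still costs the algorithm `β * δ ^ 3` up to the potential, so the additive
constant does not help it.
-/

/-- A fractional schedule of problem cSP: states in `[0, 1]`, starting in state `0`. -/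
structure IsSchedule (x : ℕ → ℝ) : Prop where
  mem_Icc : ∀ t, x t ∈ Set.Icc (0 : ℝ) 1
  zero : x 0 = 0

/-- A rule that assigns states to a pair of cost sequences is online if its state at time `t` is
determined by the costs up to time `t`. -/
def IsOnline (A : (ℕ → ℝ) → (ℕ → ℝ) → ℕ → ℝ) : Prop :=
  ∀ g0 g1 g0' g1' t, (∀ τ, τ ≤ t → g0 τ = g0' τ ∧ g1 τ = g1' τ) → A g0 g1 t = A g0' g1' t

/-- The sequence that starts with `default` and whose entry at `t + 1` is `σ` applied to the
entries up to `t`: the outcome of a strategy `σ` which looks only at the past.  The entries after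
`t` are replaced by `default`, so the equation `causalSeq_succ` needs `σ` to ignore them. -/
def causalSeq {α : Type*} [Inhabited α] (σ : (ℕ → α) → ℕ → α) : ℕ → α
  | 0 => default
  | t + 1 => σ (fun τ ↦ if _ : τ ≤ t then causalSeq σ τ else default) t

lemma causalSeq_succ {α : Type*} [Inhabited α] {σ : (ℕ → α) → ℕ → α}
    (hσ : ∀ d d' t, (∀ τ ≤ t, d τ = d' τ) → σ d t = σ d' t) (t : ℕ) :
    causalSeq σ (t + 1) = σ (causalSeq σ) t := by
  rw [causalSeq]
  exact hσ _ _ t fun τ hτ ↦ dif_pos hτ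

section Cost

variable {T : ℕ} {β : ℝ} {g0 g1 x y : ℕ → ℝ}

lemma cost_succ (T : ℕ) (β : ℝ) (g0 g1 x : ℕ → ℝ) :
    cost (T + 1) β g0 g1 x = cost T β g0 g1 x +
      ((1 - x (T + 1)) * g0 (T + 1) + x (T + 1) * g1 (T + 1) + β * max (x (T + 1) - x T) 0) := by
  simp only [cost, Finset.sum_Icc_succ_top (Nat.le_add_left 1 T), Nat.add_sub_cancel]

lemma cost_congr (h : ∀ t ≤ T, x t = y t) : cost T β g0 g1 x = cost T β g0 g1 y := by
  refine Finset.sum_congr rfl fun t ht ↦ ?_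
  have htT : t ≤ T := (Finset.mem_Icc.mp ht).2
  rw [h t htT, h (t - 1) ((Nat.sub_le t 1).trans htT)]

lemma cost_nonneg (hβ : 0 ≤ β) (hg : ∀ t, 1 ≤ t → t ≤ T → 0 ≤ g0 t ∧ 0 ≤ g1 t)
    (hx : ∀ t, x t ∈ Set.Icc (0 : ℝ) 1) : 0 ≤ cost T β g0 g1 x := by
  refine Finset.sum_nonneg fun t ht ↦ ?_
  obtain ⟨h1t, htT⟩ := Finset.mem_Icc.mp ht
  obtain ⟨h0, h1⟩ := hg t h1t htT
  have hidle : 0 ≤ 1 - x t := sub_nonneg.mpr (hx t).2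
  have hactive : 0 ≤ x t := (hx t).1
  positivity

lemma copt_nonneg (hβ : 0 ≤ β) (hg : ∀ t, 1 ≤ t → t ≤ T → 0 ≤ g0 t ∧ 0 ≤ g1 t) :
    0 ≤ copt T β g0 g1 := by
  refine Real.sInf_nonneg ?_
  rintro _ ⟨x, hx, -, rfl⟩
  exact cost_nonneg hβ hg hx

lemma copt_le_cost (hβ : 0 ≤ β) (hg : ∀ t, 1 ≤ t → t ≤ T → 0 ≤ g0 t ∧ 0 ≤ g1 t)
    (hx : IsSchedule x) : copt T β g0 g1 ≤ cost T β g0 g1 x := by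
  refine csInf_le ⟨0, ?_⟩ ⟨x, hx.mem_Icc, hx.zero, rfl⟩
  rintro _ ⟨y, hy, -, rfl⟩
  exact cost_nonneg hβ hg hy

end Cost

section WorkFunction

variable {T : ℕ} {β : ℝ} {g0 g1 : ℕ → ℝ} {s u v : ℝ}

/-- Some schedule serves the first `T` requests and then switches to state `s`, at total cost at
most `u`.  The final switch is paid for before the next request arrives. -/
def ReachableWithin (T : ℕ) (β : ℝ) (g0 g1 : ℕ → ℝ) (s u : ℝ) : Prop :=
  ∃ x, IsSchedule x ∧ cost T β g0 g1 x + β * max (s - x T) 0 ≤ u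

lemma ReachableWithin.min (hu : ReachableWithin T β g0 g1 s u)
    (hv : ReachableWithin T β g0 g1 s v) : ReachableWithin T β g0 g1 s (min u v) := by
  rcases min_choice u v with h | h <;> rwa [h]

lemma ReachableWithin.succ (h : ReachableWithin T β g0 g1 s u) (hs : s ∈ Set.Icc (0 : ℝ) 1)
    (s' : ℝ) :
    ReachableWithin (T + 1) β g0 g1 s'
      (u + ((1 - s) * g0 (T + 1) + s * g1 (T + 1)) + β * max (s' - s) 0) := by
  obtain ⟨x, hx, hcost⟩ := h
  have hprefix : ∀ t ≤ T, Function.update x (T + 1) s t = x t := fun t ht ↦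
    Function.update_of_ne (Nat.lt_succ_of_le ht).ne s x
  refine ⟨Function.update x (T + 1) s, ⟨fun t ↦ ?_, (hprefix 0 T.zero_le).trans hx.zero⟩, ?_⟩
  · rcases eq_or_ne t (T + 1) with rfl | ht
    · rwa [Function.update_self]
    · rw [Function.update_of_ne ht]
      exact hx.mem_Icc t
  · rw [cost_succ, cost_congr hprefix, Function.update_self, hprefix T le_rfl]
    linarith

/-- The offline work function of problem cSP at the two integral states: the least cost of serving
the first `t` requests and then standing in state `0` (first component) or `1` (second component).
Only switching from `0` to `1` is charged. -/
noncomputable def workFunction (β : ℝ) (g0 g1 : ℕ → ℝ) : ℕ → ℝ × ℝ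
  | 0 => (0, β)
  | t + 1 =>
    let w := workFunction β g0 g1 t
    (min (w.1 + g0 (t + 1)) (w.2 + g1 (t + 1)), min (w.2 + g1 (t + 1)) (w.1 + g0 (t + 1) + β))

lemma workFunction_congr {g0' g1' : ℕ → ℝ} (h : ∀ t ≤ T, g0 t = g0' t ∧ g1 t = g1' t) :
    workFunction β g0 g1 T = workFunction β g0' g1' T := by
  induction T with
  | zero => rfl
  | succ T ih =>
    simp only [workFunction, ih fun t ht ↦ h t (ht.trans T.le_succ), h (T + 1) le_rfl]

lemma workFunction_fst_le_snd (hβ : 0 ≤ β) (t : ℕ) :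
    (workFunction β g0 g1 t).1 ≤ (workFunction β g0 g1 t).2 := by
  cases t with
  | zero => exact hβ
  | succ t => exact le_min (min_le_right _ _) ((min_le_left _ _).trans (le_add_of_nonneg_right hβ))

lemma workFunction_snd_le_fst_add (hβ : 0 ≤ β) (t : ℕ) :
    (workFunction β g0 g1 t).2 ≤ (workFunction β g0 g1 t).1 + β := by
  cases t with
  | zero => exact (zero_add β).ge
  | succ t =>
    simp only [workFunction, ← min_add_add_right]
    exact le_min (min_le_right _ _) ((min_le_left _ _).trans (le_add_of_nonneg_right hβ))

lemma reachableWithin_workFunction (β : ℝ) (g0 g1 : ℕ → ℝ) (T : ℕ) :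
    ReachableWithin T β g0 g1 0 (workFunction β g0 g1 T).1 ∧
      ReachableWithin T β g0 g1 1 (workFunction β g0 g1 T).2 := by
  induction T with
  | zero =>
    have hidle : IsSchedule fun _ ↦ 0 := ⟨fun _ ↦ ⟨le_rfl, zero_le_one⟩, rfl⟩
    exact ⟨⟨_, hidle, by simp [cost, workFunction]⟩, ⟨_, hidle, by simp [cost, workFunction]⟩⟩
  | succ T ih =>
    have h0 : (0 : ℝ) ∈ Set.Icc (0 : ℝ) 1 := ⟨le_rfl, zero_le_one⟩
    have h1 : (1 : ℝ) ∈ Set.Icc (0 : ℝ) 1 := ⟨zero_le_one, le_rfl⟩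
    constructor
    · simpa [workFunction] using (ih.1.succ h0 0).min (ih.2.succ h1 0)
    · simpa [workFunction] using (ih.2.succ h1 1).min (ih.1.succ h0 1)

lemma copt_le_workFunction_fst (hβ : 0 ≤ β)
    (hg : ∀ t, 1 ≤ t → t ≤ T → 0 ≤ g0 t ∧ 0 ≤ g1 t) :
    copt T β g0 g1 ≤ (workFunction β g0 g1 T).1 := by
  obtain ⟨x, hx, hcost⟩ := (reachableWithin_workFunction β g0 g1 T).1
  have hswitch : 0 ≤ β * max (0 - x T) 0 := by positivity
  linarith [copt_le_cost hβ hg hx]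

/-- The difference of the two values of the work function, in units of `β`. -/
noncomputable def workGap (β : ℝ) (g0 g1 : ℕ → ℝ) (t : ℕ) : ℝ :=
  ((workFunction β g0 g1 t).2 - (workFunction β g0 g1 t).1) / β

lemma workGap_congr {g0' g1' : ℕ → ℝ} (h : ∀ t ≤ T, g0 t = g0' t ∧ g1 t = g1' t) :
    workGap β g0 g1 T = workGap β g0' g1' T := by
  rw [workGap, workGap, workFunction_congr h]

lemma workGap_zero (hβ : β ≠ 0) : workGap β g0 g1 0 = 1 := by
  simp [workGap, workFunction, hβ]

lemma workGap_mem_Icc (hβ : 0 < β) (t : ℕ) : workGap β g0 g1 t ∈ Set.Icc (0 : ℝ) 1 :=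
  ⟨div_nonneg (sub_nonneg.mpr (workFunction_fst_le_snd hβ.le t)) hβ.le,
    (div_le_one hβ).mpr (sub_le_iff_le_add'.mpr (workFunction_snd_le_fst_add hβ.le t))⟩

lemma workFunction_snd_eq (hβ : β ≠ 0) (t : ℕ) :
    (workFunction β g0 g1 t).2 = (workFunction β g0 g1 t).1 + β * workGap β g0 g1 t := by
  rw [workGap, mul_div_cancel₀ _ hβ, add_sub_cancel]

lemma workFunction_succ_of_charge_zero {t : ℕ} {δ : ℝ} (hβ : 0 < β) (hδ : 0 ≤ δ)
    (h0 : g0 (t + 1) = β * δ) (h1 : g1 (t + 1) = 0) :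
    workFunction β g0 g1 (t + 1) =
      ((workFunction β g0 g1 t).1 + β * min (workGap β g0 g1 t) δ, (workFunction β g0 g1 t).2) := by
  have hle := workFunction_snd_le_fst_add (g0 := g0) (g1 := g1) hβ.le t
  have hcharge : 0 ≤ β * δ := by positivity
  simp only [workFunction, h0, h1, add_zero, Prod.mk.injEq]
  constructor
  · rw [workFunction_snd_eq hβ.ne', min_add_add_left, min_comm, mul_min_of_nonneg _ _ hβ.le]
  · exact min_eq_left (by linarith)

lemma workFunction_succ_of_charge_one {t : ℕ} {δ : ℝ} (hβ : 0 < β) (hδ : 0 ≤ δ)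
    (h0 : g0 (t + 1) = 0) (h1 : g1 (t + 1) = β * δ) :
    workFunction β g0 g1 (t + 1) =
      ((workFunction β g0 g1 t).1,
        (workFunction β g0 g1 t).2 + β * min (1 - workGap β g0 g1 t) δ) := by
  have hle := workFunction_fst_le_snd (g0 := g0) (g1 := g1) hβ.le t
  have hcharge : 0 ≤ β * δ := by positivity
  simp only [workFunction, h0, h1, add_zero, Prod.mk.injEq]
  constructor
  · exact min_eq_left (by linarith)
  · have hfst : (workFunction β g0 g1 t).1 + β =
        (workFunction β g0 g1 t).2 + β * (1 - workGap β g0 g1 t) := by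
      rw [workFunction_snd_eq hβ.ne']; ring
    rw [hfst, min_add_add_left, min_comm, mul_min_of_nonneg _ _ hβ.le]

end WorkFunction

section Potential

variable {δ a a' u v y : ℝ}

/-- The idle mass `1 - a` above which the adversary charges state `0` when the normalized gap of
the work function is `u`.  The term `δ ^ 2 * (1 - 2 * u)` keeps it inside `[δ ^ 2, 1 - δ ^ 2]`, so
that charges which leave the work function unchanged still hit a mass of at least `δ ^ 2`. -/
def chargeThreshold (δ u : ℝ) : ℝ := u + δ ^ 2 * (1 - 2 * u)

/-- The potential of state `a` at normalized gap `u`.  The slopes `δ` and `1 - δ`, in place of `0`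
and `1`, let a charge be paid for by the state held before the algorithm reacts to it. -/
noncomputable def potential (δ a u : ℝ) : ℝ :=
  u ^ 2 / 2 + max (δ * (1 - a - u)) ((1 - δ) * (1 - a - u))

lemma max_mul_eq_add_max_neg (hδ : δ ≤ 1 / 2) (y : ℝ) :
    max (δ * y) ((1 - δ) * y) = (1 - δ) * y + (1 - 2 * δ) * max (-y) 0 := by
  rw [mul_max_of_nonneg _ _ (by linarith : 0 ≤ 1 - 2 * δ), ← max_add_add_left]
  congr 1 <;> ring

lemma max_mul_eq_add_max (hδ : δ ≤ 1 / 2) (y : ℝ) :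
    max (δ * y) ((1 - δ) * y) = δ * y + (1 - 2 * δ) * max y 0 := by
  rw [mul_max_of_nonneg _ _ (by linarith : 0 ≤ 1 - 2 * δ), ← max_add_add_left, max_comm]
  congr 1 <;> ring

lemma potential_le (hδ0 : 0 ≤ δ) (hδ1 : δ ≤ 1) (ha : 0 ≤ a) (hu : u ∈ Set.Icc (0 : ℝ) 1) :
    potential δ a u ≤ 3 / 2 := by
  have hsq : u ^ 2 ≤ 1 := pow_le_one₀ hu.1 hu.2
  have hmax : max (δ * (1 - a - u)) ((1 - δ) * (1 - a - u)) ≤ 1 :=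
    max_le (by nlinarith [hu.1]) (by nlinarith [hu.1])
  rw [potential]
  linarith

-- The two charges are mirror images: `v` and `y` are `u` and `(1 - a) - u` when state `0` is
-- charged, and `1 - u` and `a - (1 - u)` when state `1` is charged.
lemma gain_le_drift (hδ0 : 0 ≤ δ) (hδ : δ ≤ 1 / 4) (hv : v ∈ Set.Icc (0 : ℝ) 1)
    (hy : δ ^ 2 * (1 - 2 * v) ≤ y) :
    (1 - 3 * δ) * min v δ + δ ^ 3 ≤
      (1 - δ) * min v δ + v * (δ - min v δ) + min v δ ^ 2 / 2 + δ * y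
        - (1 - 2 * δ) * max (-y) 0 := by
  obtain ⟨hv0, hv1⟩ := hv
  have hδy : δ ^ 3 * (1 - 2 * v) ≤ δ * y := by
    linarith [mul_le_mul_of_nonneg_left hy hδ0]
  rcases le_total δ v with h | h
  · rw [min_eq_right h]
    have hδ3 : δ ^ 3 * v ≤ δ ^ 3 := mul_le_of_le_one_right (by positivity) hv1
    have hmax : max (-y) 0 ≤ δ ^ 2 := max_le (by nlinarith) (sq_nonneg δ)
    linarith [mul_le_mul_of_nonneg_left hmax (by linarith : 0 ≤ 1 - 2 * δ), sq_nonneg δ]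
  · have hy0 : 0 ≤ y := (mul_nonneg (sq_nonneg δ) (by linarith)).trans hy
    rw [min_eq_left h, max_eq_right (neg_nonpos.mpr hy0)]
    have hsq : v * v ≤ δ * v := mul_le_mul_of_nonneg_right h hv0
    have hcube : δ ^ 3 * v ≤ δ * v :=
      mul_le_mul_of_nonneg_right (pow_le_of_le_one hδ0 (by linarith) three_ne_zero) hv0
    linarith [mul_nonneg hδ0 hv0]

lemma potential_step_of_charge_zero (hδ0 : 0 ≤ δ) (hδ : δ ≤ 1 / 4) (hu : u ∈ Set.Icc (0 : ℝ) 1)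
    (ha : chargeThreshold δ u ≤ 1 - a) :
    (1 - 3 * δ) * min u δ + δ ^ 3 + potential δ a u ≤
      (1 - a') * δ + max (a' - a) 0 + potential δ a' (u - min u δ) := by
  have hdrift := gain_le_drift (y := 1 - a - u) hδ0 hδ hu (by rw [chargeThreshold] at ha; linarith)
  have hswitch : (1 - δ) * (a' - a) + δ * (a' - a) ≤ max (a' - a) 0 := by
    linarith [le_max_left (a' - a) 0]
  have hline := le_max_right (δ * (1 - a' - (u - min u δ))) ((1 - δ) * (1 - a' - (u - min u δ)))
  rw [potential, potential, max_mul_eq_add_max_neg (by linarith) (1 - a - u)]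
  linarith

lemma potential_step_of_charge_one (hδ0 : 0 ≤ δ) (hδ : δ ≤ 1 / 4) (hu : u ∈ Set.Icc (0 : ℝ) 1)
    (ha : 1 - a ≤ chargeThreshold δ u) :
    (1 - 3 * δ) * min (1 - u) δ + δ ^ 3 + potential δ a u ≤
      a' * δ + max (a' - a) 0 + potential δ a' (u + min (1 - u) δ) := by
  have hdrift := gain_le_drift (v := 1 - u) (y := -(1 - a - u)) hδ0 hδ
    ⟨sub_nonneg.mpr hu.2, sub_le_self 1 hu.1⟩ (by rw [chargeThreshold] at ha; linarith)
  rw [neg_neg] at hdrift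
  have hswitch := le_max_right (a' - a) 0
  have hline := le_max_left (δ * (1 - a' - (u + min (1 - u) δ)))
    ((1 - δ) * (1 - a' - (u + min (1 - u) δ)))
  rw [potential, potential, max_mul_eq_add_max (by linarith) (1 - a - u)]
  linarith

end Potential

section Adversary

variable {β δ : ℝ} {g0 g1 a : ℕ → ℝ}

/-- The pair of costs `(g_{t+1}(0), g_{t+1}(1))` that the adversary presents after seeing the
state `a t`: it charges `β * δ` to state `0` if the idle mass exceeds the threshold, and to state
`1` otherwise. -/
noncomputable def adversaryMove (β δ : ℝ) (g0 g1 a : ℕ → ℝ) (t : ℕ) : ℝ × ℝ :=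
  if chargeThreshold δ (workGap β g0 g1 t) < 1 - a t then (β * δ, 0) else (0, β * δ)

/-- The costs `g0`, `g1` are those that the adversary presents against the states `a`. -/
def IsAdversarial (β δ : ℝ) (g0 g1 a : ℕ → ℝ) : Prop :=
  ∀ t, (g0 (t + 1), g1 (t + 1)) = adversaryMove β δ g0 g1 a t

lemma IsOnline.exists_isAdversarial {A : (ℕ → ℝ) → (ℕ → ℝ) → ℕ → ℝ} (hA : IsOnline A)
    (β δ : ℝ) : ∃ g0 g1, IsAdversarial β δ g0 g1 (A g0 g1) := by
  let σ : (ℕ → ℝ × ℝ) → ℕ → ℝ × ℝ := fun g ↦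
    let g0 := fun t ↦ (g t).1
    let g1 := fun t ↦ (g t).2
    adversaryMove β δ g0 g1 (A g0 g1)
  refine ⟨fun t ↦ (causalSeq σ t).1, fun t ↦ (causalSeq σ t).2, causalSeq_succ (σ := σ) ?_⟩
  intro g g' t h
  have hcosts : ∀ τ ≤ t, (g τ).1 = (g' τ).1 ∧ (g τ).2 = (g' τ).2 := fun τ hτ ↦
    ⟨congrArg Prod.fst (h τ hτ), congrArg Prod.snd (h τ hτ)⟩
  simp only [σ, adversaryMove, workGap_congr hcosts, hA _ _ _ _ t hcosts]

lemma IsAdversarial.nonneg (h : IsAdversarial β δ g0 g1 a) (hβδ : 0 ≤ β * δ) {t : ℕ}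
    (ht : 1 ≤ t) : 0 ≤ g0 t ∧ 0 ≤ g1 t := by
  obtain ⟨s, rfl⟩ := Nat.exists_eq_add_of_le' ht
  have hmove := h s
  rw [adversaryMove] at hmove
  split_ifs at hmove <;> obtain ⟨h0, h1⟩ := Prod.mk.inj hmove <;> rw [h0, h1]
  exacts [⟨hβδ, le_rfl⟩, ⟨le_rfl, hβδ⟩]

lemma IsAdversarial.amortized_step (h : IsAdversarial β δ g0 g1 a) (hβ : 0 < β) (hδ0 : 0 ≤ δ)
    (hδ : δ ≤ 1 / 4) (t : ℕ) :
    (1 - 3 * δ) * ((workFunction β g0 g1 (t + 1)).1 + (workFunction β g0 g1 (t + 1)).2)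
        + β * δ ^ 3 + β * potential δ (a t) (workGap β g0 g1 t) ≤
      (1 - 3 * δ) * ((workFunction β g0 g1 t).1 + (workFunction β g0 g1 t).2)
        + ((1 - a (t + 1)) * g0 (t + 1) + a (t + 1) * g1 (t + 1) + β * max (a (t + 1) - a t) 0)
        + β * potential δ (a (t + 1)) (workGap β g0 g1 (t + 1)) := by
  have hu := workGap_mem_Icc (g0 := g0) (g1 := g1) hβ t
  have hmove := h t
  rw [adversaryMove] at hmove
  split_ifs at hmove with ha <;> obtain ⟨h0, h1⟩ := Prod.mk.inj hmove
  · have hw := workFunction_succ_of_charge_zero hβ hδ0 h0 h1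
    have hgap : workGap β g0 g1 (t + 1) = workGap β g0 g1 t - min (workGap β g0 g1 t) δ := by
      rw [workGap, hw, workFunction_snd_eq hβ.ne']
      field_simp
      ring
    rw [hgap, hw, h0, h1]
    have hstep := potential_step_of_charge_zero (a' := a (t + 1)) hδ0 hδ hu ha.le
    linarith [mul_le_mul_of_nonneg_left hstep hβ.le]
  · have hw := workFunction_succ_of_charge_one hβ hδ0 h0 h1
    have hgap : workGap β g0 g1 (t + 1) = workGap β g0 g1 t + min (1 - workGap β g0 g1 t) δ := by
      rw [workGap, hw, workFunction_snd_eq hβ.ne']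
      field_simp
      ring
    rw [hgap, hw, h0, h1]
    have hstep := potential_step_of_charge_one (a' := a (t + 1)) hδ0 hδ hu (not_lt.mp ha)
    linarith [mul_le_mul_of_nonneg_left hstep hβ.le]

lemma IsAdversarial.workFunction_le_cost_add_potential (h : IsAdversarial β δ g0 g1 a)
    (hβ : 0 < β) (hδ0 : 0 ≤ δ) (hδ : δ ≤ 1 / 4) (ha : a 0 = 0) (T : ℕ) :
    (1 - 3 * δ) * ((workFunction β g0 g1 T).1 + (workFunction β g0 g1 T).2) + β * δ ^ 3 * T ≤
      cost T β g0 g1 a + β * potential δ (a T) (workGap β g0 g1 T) + β / 2 := by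
  induction T with
  | zero =>
    have hβδ : 0 ≤ β * δ := by positivity
    simp only [workFunction, cost, workGap_zero hβ.ne', potential, ha]
    norm_num
    linarith
  | succ T ih =>
    rw [cost_succ]
    push_cast
    linarith [h.amortized_step hβ hδ0 hδ T]

lemma IsAdversarial.copt_le_cost (h : IsAdversarial β δ g0 g1 a) (hβ : 0 < β) (hδ0 : 0 ≤ δ)
    (hδ : δ ≤ 1 / 4) (ha : IsSchedule a) (T : ℕ) :
    2 * (1 - 3 * δ) * copt T β g0 g1 + β * δ ^ 3 * T ≤ cost T β g0 g1 a + 2 * β := by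
  have hopt : copt T β g0 g1 ≤ (workFunction β g0 g1 T).1 :=
    copt_le_workFunction_fst hβ.le fun _ ht _ ↦ h.nonneg (mul_nonneg hβ.le hδ0) ht
  have hopt2 : 2 * copt T β g0 g1 ≤ (workFunction β g0 g1 T).1 + (workFunction β g0 g1 T).2 := by
    linarith [workFunction_fst_le_snd (g0 := g0) (g1 := g1) hβ.le T]
  have hpot : potential δ (a T) (workGap β g0 g1 T) ≤ 3 / 2 :=
    potential_le hδ0 (by linarith) (ha.mem_Icc T).1 (workGap_mem_Icc hβ T)
  linarith [h.workFunction_le_cost_add_potential hβ hδ0 hδ ha.zero T,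
    mul_le_mul_of_nonneg_left hopt2 (by linarith : 0 ≤ 1 - 3 * δ),
    mul_le_mul_of_nonneg_left hpot hβ.le]

end Adversary

theorem stmt14_general {β : ℝ} (hβ : 0 < β) {A : (ℕ → ℝ) → (ℕ → ℝ) → ℕ → ℝ}
    (hA : ∀ g0 g1, IsSchedule (A g0 g1)) (hOnline : IsOnline A) {c : ℝ} (γ : ℝ) (hc : c < 2) :
    ∃ (T : ℕ) (g0 g1 : ℕ → ℝ), (∀ t, 1 ≤ t → t ≤ T → 0 ≤ g0 t ∧ 0 ≤ g1 t) ∧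
      cost T β g0 g1 (A g0 g1) > c * copt T β g0 g1 + γ := by
  obtain ⟨δ, hδ0, hδ⟩ : ∃ δ : ℝ, 0 < δ ∧ δ ≤ min (1 / 4) ((2 - c) / 6) :=
    ⟨_, lt_min (by norm_num) (by linarith), le_rfl⟩
  obtain ⟨hδ4, hδc⟩ := le_min_iff.mp hδ
  obtain ⟨g0, g1, hadv⟩ := hOnline.exists_isAdversarial β δ
  obtain ⟨T, hT⟩ := exists_nat_gt ((γ + 2 * β) / (β * δ ^ 3))
  have hT' : γ + 2 * β < T * (β * δ ^ 3) := (div_lt_iff₀ (by positivity)).mp hT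
  have hg : ∀ t, 1 ≤ t → t ≤ T → 0 ≤ g0 t ∧ 0 ≤ g1 t := fun _ ht _ ↦
    hadv.nonneg (by positivity) ht
  have hratio : c * copt T β g0 g1 ≤ 2 * (1 - 3 * δ) * copt T β g0 g1 :=
    mul_le_mul_of_nonneg_right (by linarith) (copt_nonneg hβ.le hg)
  refine ⟨T, g0, g1, hg, ?_⟩
  linarith [hadv.copt_le_cost hβ hδ0.le hδ4 (hA g0 g1) T]

/-- no deterministic online algorithm for the fractional problem
cSP has competitive ratio smaller than 2. Here `A β g0 g1 t` is the fractional
state chosen at time `t`; the algorithm takes values in `[0,1]`, starts at `0`,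
and is online (its decision at time `t` only depends on `β` and the prefix
`g_1, …, g_t`). -/
theorem stmt14 (A : ℝ → (ℕ → ℝ) → (ℕ → ℝ) → ℕ → ℝ)
    (hRange : ∀ β g0 g1 t, 0 ≤ A β g0 g1 t ∧ A β g0 g1 t ≤ 1)
    (hInit : ∀ β g0 g1, A β g0 g1 0 = 0)
    (hOnline : ∀ β g0 g1 g0' g1' t,
      (∀ τ, τ ≤ t → g0 τ = g0' τ ∧ g1 τ = g1' τ) →
      A β g0 g1 t = A β g0' g1' t)
    (c γ : ℝ) (hc : c < 2) :
    ∃ (T : ℕ) (β : ℝ), 0 < β ∧ ∃ g0 g1 : ℕ → ℝ,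
      (∀ t, 1 ≤ t → t ≤ T → 0 ≤ g0 t ∧ 0 ≤ g1 t) ∧
      cost T β g0 g1 (A β g0 g1) > c * copt T β g0 g1 + γ := by
  obtain ⟨T, g0, g1, hg, hgt⟩ := stmt14_general one_pos
    (fun g0 g1 ↦ ⟨hRange 1 g0 g1, hInit 1 g0 g1⟩) (hOnline 1) γ hc
  exact ⟨T, 1, one_pos, g0, g1, hg, hgt⟩
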